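/- Let F be a homeomorphism of the annulus A = T^1 × R homotopic to the identity, f a lift of F to R^2, and K a nonempty compact F-invariant subset of A. Let [α, β] be the rotation set of K, i.e. the set of integrals ∫ φ dμ over F-invariant Borel probability measures μ supported in K, where φ lifts p₁∘f − p₁. Then for every ε > 0 there exists N ≥ 0 such that for every z in π^{-1}(K) and every n ≥ N, α − ε < (p₁(f^n(z)) − p₁(z))/n < β + ε. -/

import Mathlib

open MeasureTheory Filter Set

noncomputable section

/-- The infinite annulus `𝔸 = T¹ × ℝ`. -/
abbrev 𝔸 : Type := AddCircle (1 : ℝ) × ℝ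

/-- The covering projection `π : ℝ² → 𝔸`. -/
def πA : ℝ × ℝ → 𝔸 := fun p => ((p.1 : AddCircle (1 : ℝ)), p.2)

/-- The deck transformation `T(x,y) = (x+1,y)`. -/
def TA : ℝ × ℝ → ℝ × ℝ := fun p => (p.1 + 1, p.2)

/-- The rotation set of a compact invariant set `K`: all integrals `∫ φ dμ` over
`F`-invariant Borel probability measures supported in `K`, where `φ` lifts `p₁∘f - p₁`. -/
def rotSet (F : 𝔸 ≃ₜ 𝔸) (φ : 𝔸 → ℝ) (K : Set 𝔸) : Set ℝ :=
  {r | ∃ μ : Measure 𝔸, IsProbabilityMeasure μ ∧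
        (∀ s : Set 𝔸, MeasurableSet s → μ ((⇑F) ⁻¹' s) = μ s) ∧
        μ Kᶜ = 0 ∧ r = ∫ x, φ x ∂μ}

/-!
If a sequence of empirical measures `n⁻¹ ∑_{k < n} δ_{T^k x}` with `n → ∞` converges weakly, then
its limit is `T`-invariant, since integrating `g ∘ T - g` against it gives a boundary term divided
by `n`. On a compact space limits exist along every ultrafilter, so every ultrafilter limit of
Birkhoff averages of `g`, with the base point free to vary, is an integral of `g` against an
invariant measure. An open set containing all these integrals thus eventually contains all the
Birkhoff averages. For the displacement `φ` these averages are `(p₁ (f^n z) - p₁ z) / n`.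
-/

section Semiconj

variable {X Y M : Type*} {S : X → X} {T : Y → Y} {p : X → Y}

theorem birkhoffSum_apply_of_semiconj [AddCommMonoid M] (h : Function.Semiconj p S T)
    (g : Y → M) (n : ℕ) (x : X) : birkhoffSum T g n (p x) = birkhoffSum S (g ∘ p) n x :=
  Finset.sum_congr rfl fun k _ => congrArg g ((h.iterate_right k).eq x).symm

theorem birkhoffAverage_apply_of_semiconj (R : Type*) [DivisionSemiring R] [AddCommMonoid M]
    [Module R M] (h : Function.Semiconj p S T) (g : Y → M) (n : ℕ) (x : X) :
    birkhoffAverage R T g n (p x) = birkhoffAverage R S (g ∘ p) n x :=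
  congrArg _ (birkhoffSum_apply_of_semiconj h g n x)

theorem birkhoffSum_coboundary [AddCommGroup M] (S : X → X) (g : X → M) (n : ℕ) (x : X) :
    birkhoffSum S (g ∘ S - g) n x = g (S^[n] x) - g x := by
  simp only [birkhoffSum, Pi.sub_apply, Function.comp_apply, ← Function.iterate_succ_apply']
  exact Finset.sum_range_sub (fun k => g (S^[k] x)) n

end Semiconj

section EmpiricalMeasure

variable {X : Type*} [MeasurableSpace X]

/-- The empirical measure `n⁻¹ ∑_{k < n} δ_{T^k x}` of an orbit segment of length `n`, whose
weak limits as `n → ∞` are invariant. It is the zero measure for `n = 0`. -/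
def empiricalMeasure (T : X → X) (n : ℕ) (x : X) : Measure X :=
  (n : ENNReal)⁻¹ • ∑ k ∈ Finset.range n, Measure.dirac (T^[k] x)

theorem isProbabilityMeasure_empiricalMeasure (T : X → X) {n : ℕ} (hn : n ≠ 0) (x : X) :
    IsProbabilityMeasure (empiricalMeasure T n x) where
  measure_univ := by
    simpa [empiricalMeasure] using ENNReal.inv_mul_cancel (by simpa using hn) (by simp)

theorem integral_empiricalMeasure {E : Type*} [NormedAddCommGroup E] [NormedSpace ℝ E]
    [CompleteSpace E] (T : X → X) (n : ℕ) (x : X) {g : X → E} (hg : StronglyMeasurable g) :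
    ∫ y, g y ∂empiricalMeasure T n x = birkhoffAverage ℝ T g n x := by
  rw [empiricalMeasure, integral_smul_measure,
    integral_finsetSum_measure fun _ _ => integrable_dirac' hg (by simp)]
  simp [birkhoffAverage, birkhoffSum, integral_dirac' _ _ hg]

end EmpiricalMeasure

section InvariantMeasure

variable {X ι : Type*} {T : X → X} {l : Filter ι} {n : ι → ℕ}

theorem tendsto_birkhoffAverage_comp_sub {E : Type*} [NormedAddCommGroup E] [NormedSpace ℝ E]
    {g : X → E} (hg : Bornology.IsBounded (range g)) (T : X → X) (hn : Tendsto n l atTop)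
    (x : ι → X) :
    Tendsto (fun i => birkhoffAverage ℝ T (g ∘ T) (n i) (x i) - birkhoffAverage ℝ T g (n i) (x i))
      l (nhds 0) := by
  obtain ⟨C, hC⟩ := Metric.isBounded_range_iff.1 hg
  have hbound : Tendsto (fun i => C / (n i : ℝ)) l (nhds 0) :=
    tendsto_const_nhds.div_atTop (tendsto_natCast_atTop_atTop.comp hn)
  refine squeeze_zero_norm (fun i => ?_) hbound
  rw [← birkhoffAverage_apply_of_semiconj ℝ (Function.Commute.refl T : Function.Semiconj T T T),
    ← dist_eq_norm, dist_birkhoffAverage_apply_birkhoffAverage]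
  gcongr
  exact hC _ _

variable [TopologicalSpace X] [MeasurableSpace X] [BorelSpace X] [HasOuterApproxClosed X]

theorem measurePreserving_of_tendsto_birkhoffAverage [l.NeBot] (hT : Continuous T)
    (hn : Tendsto n l atTop) {x : ι → X} {μ : Measure X} [IsFiniteMeasure μ]
    (hμ : ∀ g : BoundedContinuousFunction X ℝ,
      Tendsto (fun i => birkhoffAverage ℝ T g (n i) (x i)) l (nhds (∫ y, g y ∂μ))) :
    MeasurePreserving T μ μ where
  measurable := hT.measurable
  map_eq := ext_of_forall_integral_eq_of_IsFiniteMeasure fun g => by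
    rw [integral_map hT.aemeasurable g.continuous.aestronglyMeasurable]
    have hlim := (hμ (g.compContinuous ⟨T, hT⟩)).sub (hμ g)
    exact sub_eq_zero.1 <|
      tendsto_nhds_unique hlim (tendsto_birkhoffAverage_comp_sub g.isBounded_range T hn x)

variable [T2Space X] [CompactSpace X]

theorem exists_measurePreserving_tendsto_birkhoffAverage (hT : Continuous T) {U : Ultrafilter ι}
    (hn : Tendsto n U atTop) (x : ι → X) :
    ∃ μ : Measure X, IsProbabilityMeasure μ ∧ MeasurePreserving T μ μ ∧
      ∀ g : C(X, ℝ),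
        Tendsto (fun i => birkhoffAverage ℝ T g (n i) (x i)) U (nhds (∫ y, g y ∂μ)) := by
  have hemp : ∀ᶠ i in U, ∃ P : ProbabilityMeasure X, P = empiricalMeasure T (n i) (x i) :=
    (hn.eventually_ne_atTop 0).mono fun i hi =>
      ⟨⟨_, isProbabilityMeasure_empiricalMeasure T hi (x i)⟩, rfl⟩
  obtain ⟨P, hP⟩ := hemp.choice
  obtain ⟨μ, -, hPμ⟩ := isCompact_univ.ultrafilter_le_nhds (U.map P) (by simp)
  have hμ (g : BoundedContinuousFunction X ℝ) :
      Tendsto (fun i => birkhoffAverage ℝ T g (n i) (x i)) U (nhds (∫ y, g y ∂(μ : Measure X))) :=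
    (ProbabilityMeasure.tendsto_iff_forall_integral_tendsto.1 hPμ g).congr' <|
      hP.mono fun i hi => by
        rw [hi, integral_empiricalMeasure T _ _ g.continuous.stronglyMeasurable]
  exact ⟨μ, inferInstance, measurePreserving_of_tendsto_birkhoffAverage hT hn hμ,
    fun g => hμ (.mkOfCompact g)⟩

theorem eventually_forall_birkhoffAverage_mem (hT : Continuous T) (g : C(X, ℝ)) {O : Set ℝ}
    (hO : IsOpen O)
    (hg : ∀ μ : Measure X, IsProbabilityMeasure μ → MeasurePreserving T μ μ → ∫ x, g x ∂μ ∈ O) :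
    ∀ᶠ n in atTop, ∀ x, birkhoffAverage ℝ T g n x ∈ O := by
  suffices ∀ᶠ q : ℕ × X in comap Prod.fst atTop, birkhoffAverage ℝ T g q.1 q.2 ∈ O from
    (eventually_comap.1 this).mono fun n hn x => hn (n, x) rfl
  refine mem_iff_ultrafilter.2 fun U hU => ?_
  obtain ⟨μ, hμ, hTμ, hlim⟩ := exists_measurePreserving_tendsto_birkhoffAverage hT
    (tendsto_comap.mono_left hU) Prod.snd
  exact hlim g (hO.mem_nhds (hg μ hμ hTμ))

end InvariantMeasure

theorem eventually_forall_mem_birkhoffAverage_mem {Y : Type*} [TopologicalSpace Y]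
    [TopologicalSpace.MetrizableSpace Y] [MeasurableSpace Y] [BorelSpace Y] {T : Y → Y}
    (hT : Continuous T) {K : Set Y} (hK : IsCompact K) (hKT : MapsTo T K K) {g : Y → ℝ}
    (hg : ContinuousOn g K) {O : Set ℝ} (hO : IsOpen O)
    (hgO : ∀ μ : Measure Y, IsProbabilityMeasure μ → MeasurePreserving T μ μ → μ Kᶜ = 0 →
      ∫ y, g y ∂μ ∈ O) :
    ∀ᶠ n in atTop, ∀ y ∈ K, birkhoffAverage ℝ T g n y ∈ O := by
  have : CompactSpace K := isCompact_iff_compactSpace.1 hK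
  have hval : MeasurableEmbedding ((↑) : K → Y) := .subtype_coe hK.measurableSet
  have hTK : Function.Semiconj ((↑) : K → Y) (hKT.restrict T K K) T := fun _ => rfl
  have hinv (μ : Measure K) (hμ : IsProbabilityMeasure μ)
      (hTμ : MeasurePreserving (hKT.restrict T K K) μ μ) : ∫ x : K, g x ∂μ ∈ O := by
    rw [← hval.integral_map]
    refine hgO _ (Measure.isProbabilityMeasure_map hval.measurable.aemeasurable)
      ⟨hT.measurable, ?_⟩ ?_
    · rw [Measure.map_map hT.measurable hval.measurable, ← hTK.comp_eq,
        ← Measure.map_map hval.measurable hTμ.measurable, hTμ.map_eq]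
    · simp [hval.map_apply]
  filter_upwards [eventually_forall_birkhoffAverage_mem (hT.restrict hKT)
    ⟨K.domRestrict g, hg.domRestrict⟩ hO hinv] with n hn y hy
  exact birkhoffAverage_apply_of_semiconj ℝ hTK g n ⟨y, hy⟩ ▸ hn ⟨y, hy⟩

theorem isOpenQuotientMap_πA : IsOpenQuotientMap πA :=
  QuotientAddGroup.isOpenQuotientMap_mk.prodMap .id

theorem birkhoffAverage_πA {F : 𝔸 → 𝔸} {f : ℝ × ℝ → ℝ × ℝ} (hlift : Function.Semiconj πA f F)
    {φ : 𝔸 → ℝ} (hφ : ∀ p, φ (πA p) = (f p).1 - p.1) (n : ℕ) (p : ℝ × ℝ) :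
    birkhoffAverage ℝ F φ n (πA p) = ((f^[n] p).1 - p.1) / n := by
  have hφ' : φ ∘ πA = Prod.fst ∘ f - Prod.fst := funext hφ
  rw [birkhoffAverage_apply_of_semiconj ℝ hlift, hφ', birkhoffAverage, birkhoffSum_coboundary,
    smul_eq_mul, inv_mul_eq_div]

theorem stmt0_general {F : 𝔸 → 𝔸} {f : ℝ × ℝ → ℝ × ℝ} (hf : Continuous f)
    (hlift : Function.Semiconj πA f F) {K : Set 𝔸} (hKcpt : IsCompact K) (hKF : MapsTo F K K)
    {φ : 𝔸 → ℝ} (hφ : ∀ p, φ (πA p) = (f p).1 - p.1) {α β : ℝ}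
    (hrot : ∀ μ : Measure 𝔸, IsProbabilityMeasure μ → MeasurePreserving F μ μ → μ Kᶜ = 0 →
      ∫ x, φ x ∂μ ∈ Icc α β) :
    ∀ ε > (0 : ℝ), ∃ N : ℕ, ∀ p : ℝ × ℝ, πA p ∈ K → ∀ n : ℕ, N ≤ n →
      α - ε < ((f^[n] p).1 - p.1) / n ∧ ((f^[n] p).1 - p.1) / n < β + ε := by
  intro ε hε
  have hF : Continuous F := by
    rw [← isOpenQuotientMap_πA.continuous_comp_iff, ← hlift.comp_eq]
    exact isOpenQuotientMap_πA.continuous.comp hf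
  have hφc : Continuous φ := by
    rw [← isOpenQuotientMap_πA.continuous_comp_iff, show φ ∘ πA = _ from funext hφ]
    fun_prop
  have hsub : Icc α β ⊆ Ioo (α - ε) (β + ε) := Icc_subset_Ioo (by linarith) (by linarith)
  obtain ⟨N, hN⟩ := eventually_atTop.1 <| eventually_forall_mem_birkhoffAverage_mem hF hKcpt hKF
    hφc.continuousOn isOpen_Ioo fun μ hμ hFμ hμK => hsub (hrot μ hμ hFμ hμK)
  exact ⟨N, fun p hp n hn => birkhoffAverage_πA hlift hφ n p ▸ hN n hn _ hp⟩

theorem stmt0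
    (F : 𝔸 ≃ₜ 𝔸) (f : ℝ × ℝ → ℝ × ℝ) (hf : Continuous f)
    (hlift : ∀ p, πA (f p) = F (πA p)) (hdeck : ∀ p, f (TA p) = TA (f p))
    (K : Set 𝔸) (hKne : K.Nonempty) (hKcpt : IsCompact K) (hKinv : F '' K = K)
    (φ : 𝔸 → ℝ) (hφ : ∀ p : ℝ × ℝ, φ (πA p) = (f p).1 - p.1)
    (α β : ℝ) (hrot : rotSet F φ K = Set.Icc α β) :
    ∀ ε > (0 : ℝ), ∃ N : ℕ, ∀ p : ℝ × ℝ, πA p ∈ K → ∀ n : ℕ, N ≤ n →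
      α - ε < ((f^[n] p).1 - p.1) / n ∧ ((f^[n] p).1 - p.1) / n < β + ε :=
  stmt0_general hf hlift hKcpt (mapsTo_iff_image_subset.2 hKinv.subset) hφ fun μ hμ hFμ hμK =>
    hrot ▸ ⟨μ, hμ, fun _ hs => hFμ.measure_preimage hs.nullMeasurableSet, hμK, rfl⟩
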